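/- arXiv:1505.06362 — 5 statements merged into one kernel-verified Lean document; each statement's English description precedes it below -/
import Mathlib

section
/- Let F be a finite alphabet and E : Fⁿ → F^N (n, N ≥ 1) an error correcting code with relative distance 1 − μ, i.e., for all x ≠ x' in Fⁿ, |{j ∈ [N] : E(x)_j = E(x')_j}| ≤ μN. Let τ > 0 satisfy τ ≥ 2√μ, and let w : [N] → F. Then the set agr_τ(w) = {x ∈ Fⁿ : |{j ∈ [N] : E(x)_j = w_j}| ≥ τN} has cardinality at most 2/τ. -/
/-- The set of `τ`-admissible words for `w` with respect to the code `E`: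
all messages `x` whose encoding agrees with `w` on at least a `τ` fraction
of the `N` coordinates. -/
def agrSet {F : Type*} {n N : ℕ} (E : (Fin n → F) → (Fin N → F)) (τ : ℝ)
    (w : Fin N → F) : Set (Fin n → F) :=
  {x | τ * N ≤ (({j : Fin N | E x j = w j} : Set (Fin N)).ncard : ℝ)}

/-!
The agreement sets `A x = {j | E x j = w j}` of the admissible words are large, while
`A x ∩ A y` lies in the set where `E x` and `E y` agree, hence is small for `x ≠ y`.
Counting the triples `(j, x, y)` with `j ∈ A x ∩ A y`, for `x`, `y` in a finite set of `m`
admissible words, and applying Cauchy–Schwarz over `j`, the sum `s` of the densities of the `A x`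
satisfies `s ^ 2 ≤ s + m ^ 2 * μ`. As `t ↦ t * (t - 1)` increases for `t ≥ 1` and `m * τ ≤ s`, the
same inequality holds with `m * τ` in place of `s`, that is, `m * (τ ^ 2 - μ) ≤ τ`. Once
`2 * μ ≤ τ ^ 2`, this gives `m ≤ 2 / τ`.
-/

section SetFamily

open Finset

variable {ι α K : Type*} [DecidableEq α]

theorem sum_sq_card_filter_mem [Fintype α] (T : Finset ι) (A : ι → Finset α) :
    ∑ a, #{i ∈ T | a ∈ A i} ^ 2 = ∑ p ∈ T ×ˢ T, #(A p.1 ∩ A p.2) := by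
  have hpairs (a : α) :
      #{i ∈ T | a ∈ A i} ^ 2 = #{p ∈ T ×ˢ T | a ∈ A p.1 ∩ A p.2} := by
    simp only [mem_inter]
    rw [sq, ← card_product, filter_product (a ∈ A ·) (a ∈ A ·)]
  simp only [hpairs]
  refine (sum_card_bipartiteAbove_eq_sum_card_bipartiteBelow
    fun a (p : ι × ι) ↦ a ∈ A p.1 ∩ A p.2).trans ?_
  simp only [bipartiteBelow, filter_univ_mem]

theorem sq_sum_card_le_card_mul_sum_card_inter [Fintype α] (T : Finset ι) (A : ι → Finset α) :
    (∑ i ∈ T, #(A i)) ^ 2 ≤ Fintype.card α * ∑ p ∈ T ×ˢ T, #(A p.1 ∩ A p.2) := by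
  have hcount : ∑ a, #{i ∈ T | a ∈ A i} = ∑ i ∈ T, #(A i) := by
    refine (sum_card_bipartiteAbove_eq_sum_card_bipartiteBelow
      fun a i ↦ a ∈ A i).trans ?_
    simp only [bipartiteBelow, filter_univ_mem]
  rw [← hcount, ← sum_sq_card_filter_mem]
  exact sq_sum_le_card_mul_sum_sq

section OrderedSemiring

variable [Semiring K] [PartialOrder K] [IsOrderedRing K]

theorem sum_card_inter_le_of_pairwise {T : Finset ι} {A : ι → Finset α} {b : K}
    (hA : (T : Set ι).Pairwise fun i k ↦ (#(A i ∩ A k) : K) ≤ b) :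
    ∑ p ∈ T ×ˢ T, (#(A p.1 ∩ A p.2) : K) ≤ ∑ i ∈ T, (#(A i) : K) + #T.offDiag * b := by
  classical
  rw [← diag_union_offDiag, sum_union (disjoint_diag_offDiag T), sum_diag, ← nsmul_eq_mul]
  simp only [inter_self]
  gcongr
  refine sum_le_card_nsmul _ _ _ fun p hp ↦ ?_
  obtain ⟨hp₁, hp₂, hne⟩ := mem_offDiag.1 hp
  exact hA hp₁ hp₂ hne

theorem sq_sum_card_le_of_pairwise [Fintype α] {T : Finset ι} {A : ι → Finset α} {b : K}
    (hA : (T : Set ι).Pairwise fun i k ↦ (#(A i ∩ A k) : K) ≤ b) :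
    (∑ i ∈ T, (#(A i) : K)) ^ 2 ≤
      Fintype.card α * (∑ i ∈ T, (#(A i) : K) + #T.offDiag * b) := by
  calc (∑ i ∈ T, (#(A i) : K)) ^ 2
      ≤ Fintype.card α * ∑ p ∈ T ×ˢ T, (#(A p.1 ∩ A p.2) : K) := by
        simpa only [Nat.cast_pow, Nat.cast_mul, Nat.cast_sum] using
          Nat.mono_cast (α := K) (sq_sum_card_le_card_mul_sum_card_inter T A)
    _ ≤ Fintype.card α * (∑ i ∈ T, (#(A i) : K) + #T.offDiag * b) := by
        gcongr
        exact sum_card_inter_le_of_pairwise hA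

end OrderedSemiring

variable [Field K] [LinearOrder K] [IsStrictOrderedRing K]

theorem le_div_sq_sub_of_sq_le {m s μ τ : K} (hm : 0 ≤ m) (hμ : 0 ≤ μ) (hτ : 0 ≤ τ)
    (hμτ : μ < τ ^ 2) (hms : m * τ ≤ s) (hs : s ^ 2 ≤ s + m ^ 2 * μ) :
    m ≤ τ / (τ ^ 2 - μ) := by
  rw [le_div_iff₀ (sub_pos.2 hμτ)]
  have hquad : (m * τ) ^ 2 ≤ m * τ + m ^ 2 * μ := by
    have hmμ : 0 ≤ m ^ 2 * μ := by positivity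
    rcases le_total (m * τ) 1 with hle | hge
    · nlinarith [mul_nonneg hm hτ]
    · have : m * τ * (m * τ - 1) ≤ s * (s - 1) := by gcongr; linarith
      linarith
  rcases hm.eq_or_lt with rfl | hmpos
  · simpa only [zero_mul] using hτ
  · refine le_of_mul_le_mul_left ?_ hmpos
    linarith

theorem card_le_div_sq_sub_of_pairwise [Fintype α] [Nonempty α] {T : Finset ι}
    {A : ι → Finset α} {μ τ : K} (hμ : 0 ≤ μ) (hτ : 0 ≤ τ) (hμτ : μ < τ ^ 2)
    (hlarge : ∀ i ∈ T, τ * Fintype.card α ≤ #(A i))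
    (hinter : (T : Set ι).Pairwise fun i k ↦ (#(A i ∩ A k) : K) ≤ μ * Fintype.card α) :
    (#T : K) ≤ τ / (τ ^ 2 - μ) := by
  set N : K := (Fintype.card α : K)
  set S : K := ∑ i ∈ T, (#(A i) : K)
  have hN : 0 < N := Nat.cast_pos.2 Fintype.card_pos
  have hS : #T * (τ * N) ≤ S := by
    simpa only [nsmul_eq_mul] using card_nsmul_le_sum _ _ _ hlarge
  have hoffDiag : (#T.offDiag : K) ≤ #T ^ 2 := by
    rw [offDiag_card, sq]
    exact_mod_cast Nat.sub_le _ _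
  have hsq : S ^ 2 ≤ N * (S + #T ^ 2 * (μ * N)) := by
    refine (sq_sum_card_le_of_pairwise hinter).trans ?_
    gcongr
  refine le_div_sq_sub_of_sq_le (s := S / N) (Nat.cast_nonneg _) hμ hτ hμτ ?_ ?_
  · rwa [le_div_iff₀ hN, mul_assoc]
  · rw [div_pow, div_le_iff₀ (by positivity)]
    calc S ^ 2 ≤ N * (S + #T ^ 2 * (μ * N)) := hsq
      _ = (S / N + #T ^ 2 * μ) * N ^ 2 := by field_simp

end SetFamily

theorem finite_and_ncard_le_of_forall_finset_card_le {ι K : Type*} [Semiring K] [LinearOrder K]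
    [IsStrictOrderedRing K] [Archimedean K] {s : Set ι} {r : K}
    (h : ∀ T : Finset ι, (T : Set ι) ⊆ s → (T.card : K) ≤ r) :
    s.Finite ∧ (s.ncard : K) ≤ r := by
  have hfin : s.Finite := by
    by_contra hinf
    obtain ⟨k, hk⟩ := exists_nat_gt r
    obtain ⟨T, hTs, rfl⟩ := Set.Infinite.exists_subset_card_eq hinf k
    exact (h T hTs).not_gt hk
  refine ⟨hfin, ?_⟩
  rw [Set.ncard_eq_toFinset_card s hfin]
  exact h _ hfin.coe_toFinset.subset

theorem div_sq_sub_le_two_div {K : Type*} [Field K] [LinearOrder K] [IsStrictOrderedRing K]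
    {μ τ : K} (hτ : 0 < τ) (hμτ : 2 * μ ≤ τ ^ 2) : τ / (τ ^ 2 - μ) ≤ 2 / τ := by
  have hτsq : 0 < τ ^ 2 := by positivity
  rw [div_le_div_iff₀ (by linarith) hτ]
  linarith

theorem stmt1_general {F : Type*} {n N : ℕ} (hN : 1 ≤ N) (E : (Fin n → F) → (Fin N → F))
    {μ τ : ℝ} (hμ : 0 ≤ μ)
    (hdist : ∀ x x' : Fin n → F, x ≠ x' →
      (({j : Fin N | E x j = E x' j} : Set (Fin N)).ncard : ℝ) ≤ μ * N)
    (hτ : √μ < τ) (w : Fin N → F) :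
    (agrSet E τ w).Finite ∧ ((agrSet E τ w).ncard : ℝ) ≤ τ / (τ ^ 2 - μ) := by
  classical
  have : Nonempty (Fin N) := Fin.pos_iff_nonempty.1 hN
  have hτpos : 0 < τ := (Real.sqrt_nonneg μ).trans_lt hτ
  let A (x : Fin n → F) : Finset (Fin N) := {j | E x j = w j}
  refine finite_and_ncard_le_of_forall_finset_card_le fun T hT ↦
    card_le_div_sq_sub_of_pairwise (A := A) hμ hτpos.le ((Real.sqrt_lt' hτpos).1 hτ) ?_ ?_
  · intro x hx
    have hagr : τ * N ≤ ({j | E x j = w j} : Set (Fin N)).ncard := hT hx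
    simpa only [A, Fintype.card_fin, ← Set.ncard_coe_finset, Finset.coe_filter_univ] using hagr
  · intro x _ y _ hxy
    have hsub : (A x ∩ A y : Set (Fin N)) ⊆ {j | E x j = E y j} := by
      rintro j ⟨hx, hy⟩
      exact (Finset.mem_filter_univ j |>.1 hx).trans (Finset.mem_filter_univ j |>.1 hy).symm
    rw [Fintype.card_fin, ← Set.ncard_coe_finset, Finset.coe_inter]
    exact (Nat.cast_le.2 (Set.ncard_le_ncard hsub)).trans (hdist x y hxy)

/-- If `E : Fⁿ → F^N` has relative distance `1 − μ` and `τ ≥ 2√μ`, `τ > 0`,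
then for any word `w` the set `agr_τ(w)` of `τ`-admissible messages has
cardinality at most `2/τ`. -/
theorem stmt1 (F : Type*) [Fintype F] (n N : ℕ) (hn : 1 ≤ n) (hN : 1 ≤ N)
    (E : (Fin n → F) → (Fin N → F)) (μ τ : ℝ) (hμ : 0 ≤ μ)
    (hdist : ∀ x x' : Fin n → F, x ≠ x' →
      (({j : Fin N | E x j = E x' j} : Set (Fin N)).ncard : ℝ) ≤ μ * N)
    (hτpos : 0 < τ) (hτ : 2 * Real.sqrt μ ≤ τ)
    (w : Fin N → F) :
    ((agrSet E τ w).ncard : ℝ) ≤ 2 / τ := by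
  have hμτ : 2 * μ ≤ τ ^ 2 := by nlinarith [Real.sq_sqrt hμ, Real.sqrt_nonneg μ]
  exact (stmt1_general hN E hμ hdist (by linarith) w).2.trans (div_sq_sub_le_two_div hτpos hμτ)
end

section
/- Let F be a finite alphabet and E : Fⁿ → F^N (n, N ≥ 1) an error correcting code with relative distance 1 − μ, i.e., for all x ≠ x' in Fⁿ, |{j ∈ [N] : E(x)_j = E(x')_j}| ≤ μN. Let τ > 0 satisfy τ ≥ 2√μ and let w : [N] → F. Call an index j ∈ [N] ambiguous for w if there exist two distinct elements x ≠ x' of agr_τ(w) with E(x)_j = w_j and E(x')_j = w_j. Then the number of ambiguous indices is at most (4μ/τ²)·N. -/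
/-!
The agreement sets `A x = {j | E x j = w j}` of the admissible words are large subsets of the `N`
coordinates whose pairwise intersections are small, since `E x` and `E y` agree on `A x ∩ A y`.
Applying Cauchy–Schwarz to the number of sets `A x` through a coordinate, whose second moment is
the sum of all `|A x ∩ A y|`, shows that there are at most `τ / (τ ^ 2 - μ)` admissible words,
hence at most `2 / τ` when `4 * μ ≤ τ ^ 2`. Each pair of them makes at most `μ * N` coordinates
ambiguous.
-/

section SetFamily

open Finset

variable {α ι : Type*} [DecidableEq ι] {s : Finset α} {A : α → Finset ι} {k m : ℝ}

theorem sum_offDiag_card_inter_le (hm : 0 ≤ m)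
    (hinter : (s : Set α).Pairwise fun x y => (#(A x ∩ A y) : ℝ) ≤ m) :
    ∑ p ∈ s.offDiag, (#(A p.1 ∩ A p.2) : ℝ) ≤ #s ^ 2 * m := by
  have hcard : (#s.offDiag : ℝ) ≤ #s ^ 2 := by
    exact_mod_cast (offDiag_card s).trans_le ((Nat.sub_le _ _).trans_eq (sq _).symm)
  calc ∑ p ∈ s.offDiag, (#(A p.1 ∩ A p.2) : ℝ) ≤ #s.offDiag • m :=
        sum_le_card_nsmul _ _ _ fun p hp =>
          have ⟨hx, hy, hxy⟩ := mem_offDiag.mp hp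
          hinter hx hy hxy
    _ ≤ #s ^ 2 * m := by rw [nsmul_eq_mul]; gcongr

variable [Fintype ι]

theorem sum_card_filter_mem (s : Finset α) (A : α → Finset ι) :
    ∑ j, #{x ∈ s | j ∈ A x} = ∑ x ∈ s, #(A x) := by
  simpa [bipartiteAbove, bipartiteBelow] using
    sum_card_bipartiteAbove_eq_sum_card_bipartiteBelow (s := univ) (t := s) fun j x => j ∈ A x

theorem sum_card_filter_mem_sq (s : Finset α) (A : α → Finset ι) :
    ∑ j, #{x ∈ s | j ∈ A x} ^ 2 = ∑ p ∈ s ×ˢ s, #(A p.1 ∩ A p.2) := by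
  rw [← sum_card_filter_mem]
  refine sum_congr rfl fun j _ => ?_
  simp only [mem_inter]
  rw [sq, ← card_product, ← filter_product]

theorem sq_sum_card_le (hm : 0 ≤ m)
    (hinter : (s : Set α).Pairwise fun x y => (#(A x ∩ A y) : ℝ) ≤ m) :
    (∑ x ∈ s, (#(A x) : ℝ)) ^ 2 ≤
      Fintype.card ι * (∑ x ∈ s, (#(A x) : ℝ) + #s ^ 2 * m) := by
  classical
  have hfirst : ∑ j, (#{x ∈ s | j ∈ A x} : ℝ) = ∑ x ∈ s, (#(A x) : ℝ) := by
    exact_mod_cast sum_card_filter_mem s A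
  have hsecond : ∑ j, (#{x ∈ s | j ∈ A x} : ℝ) ^ 2 = ∑ p ∈ s ×ˢ s, (#(A p.1 ∩ A p.2) : ℝ) := by
    exact_mod_cast sum_card_filter_mem_sq s A
  have hdiag : ∑ p ∈ s ×ˢ s, (#(A p.1 ∩ A p.2) : ℝ) =
      ∑ x ∈ s, (#(A x) : ℝ) + ∑ p ∈ s.offDiag, (#(A p.1 ∩ A p.2) : ℝ) := by
    rw [← diag_union_offDiag, sum_union (disjoint_diag_offDiag s), sum_diag]
    simp only [inter_self]
  calc (∑ x ∈ s, (#(A x) : ℝ)) ^ 2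
      ≤ Fintype.card ι * ∑ j, (#{x ∈ s | j ∈ A x} : ℝ) ^ 2 := by
        rw [← hfirst]; exact sq_sum_le_card_mul_sum_sq
    _ ≤ Fintype.card ι * (∑ x ∈ s, (#(A x) : ℝ) + #s ^ 2 * m) := by
        rw [hsecond, hdiag]; gcongr; exact sum_offDiag_card_inter_le hm hinter

/-- Corrádi's lemma, which for agreement sets is the Johnson bound. -/
theorem card_mul_sq_sub_le (hk : 0 ≤ k) (hm : 0 ≤ m)
    (hcard : ∀ x ∈ s, k ≤ #(A x))
    (hinter : (s : Set α).Pairwise fun x y => (#(A x ∩ A y) : ℝ) ≤ m) :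
    #s * (k ^ 2 - m * Fintype.card ι) ≤ k * Fintype.card ι := by
  have hsum : #s * k ≤ ∑ x ∈ s, (#(A x) : ℝ) := by
    simpa only [nsmul_eq_mul] using card_nsmul_le_sum s _ k hcard
  have hsq := sq_sum_card_le hm hinter
  generalize ∑ x ∈ s, (#(A x) : ℝ) = S at hsum hsq
  have hN : (0 : ℝ) ≤ Fintype.card ι := Nat.cast_nonneg _
  generalize (Fintype.card ι : ℝ) = N at hsq hN ⊢
  rcases le_or_gt (#s * k) N with hle | hlt
  · calc #s * (k ^ 2 - m * N) ≤ #s * k ^ 2 := by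
          gcongr; exact sub_le_self _ (mul_nonneg hm hN)
      _ = k * (#s * k) := by ring
      _ ≤ k * N := by gcongr
  · -- `t ↦ t ^ 2 - N * t` is monotone on `[N, ∞)`, so `S` may be replaced by `#s * k` in `hsq`.
    have hmono : (#s * k) ^ 2 - N * (#s * k) ≤ S ^ 2 - N * S := by
      nlinarith [mul_nonneg (sub_nonneg.mpr hsum) (by linarith : 0 ≤ S + #s * k - N)]
    have hpos : (0 : ℝ) < #s := pos_of_mul_pos_left (hN.trans_lt hlt) hk
    refine le_of_mul_le_mul_left ?_ hpos
    linarith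

theorem card_le_div_sq_sub (hk : 0 ≤ k) (hm : 0 ≤ m)
    (hkm : m * Fintype.card ι < k ^ 2) (hcard : ∀ x ∈ s, k ≤ #(A x))
    (hinter : (s : Set α).Pairwise fun x y => (#(A x ∩ A y) : ℝ) ≤ m) :
    #s ≤ k * Fintype.card ι / (k ^ 2 - m * Fintype.card ι) :=
  (le_div_iff₀ (sub_pos.mpr hkm)).mpr (card_mul_sq_sub_le hk hm hcard hinter)

theorem finite_of_card_inter_le {S : Set α} (hk : 0 ≤ k) (hm : 0 ≤ m)
    (hkm : m * Fintype.card ι < k ^ 2) (hcard : ∀ x ∈ S, k ≤ #(A x))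
    (hinter : S.Pairwise fun x y => (#(A x ∩ A y) : ℝ) ≤ m) : S.Finite := by
  by_contra hS
  set b : ℝ := k * Fintype.card ι / (k ^ 2 - m * Fintype.card ι)
  obtain ⟨t, htS, htcard⟩ := Set.Infinite.exists_subset_card_eq hS (⌊b⌋₊ + 1)
  have ht : (#t : ℝ) ≤ b :=
    card_le_div_sq_sub hk hm hkm (fun x hx => hcard x (htS hx)) (hinter.mono htS)
  rw [htcard] at ht
  exact (Nat.lt_floor_add_one b).not_ge (by exact_mod_cast ht)

theorem ncard_setOf_exists_ne_mem_le {S : Set α} (hk : 0 ≤ k)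
    (hm : 0 ≤ m) (hkm : m * Fintype.card ι < k ^ 2) (hcard : ∀ x ∈ S, k ≤ #(A x))
    (hinter : S.Pairwise fun x y => (#(A x ∩ A y) : ℝ) ≤ m) :
    ({j | ∃ x y, x ≠ y ∧ x ∈ S ∧ y ∈ S ∧ j ∈ A x ∧ j ∈ A y}.ncard : ℝ) ≤
      (k * Fintype.card ι / (k ^ 2 - m * Fintype.card ι)) ^ 2 * m := by
  classical
  lift S to Finset α using finite_of_card_inter_le hk hm hkm hcard hinter
  have hsize : (#S : ℝ) ≤ k * Fintype.card ι / (k ^ 2 - m * Fintype.card ι) :=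
    card_le_div_sq_sub hk hm hkm hcard hinter
  have hsub : {j | ∃ x y, x ≠ y ∧ x ∈ S ∧ y ∈ S ∧ j ∈ A x ∧ j ∈ A y} ⊆
      (S.offDiag.biUnion fun p => A p.1 ∩ A p.2 : Set ι) := by
    rintro j ⟨x, y, hxy, hx, hy, hjx, hjy⟩
    exact mem_biUnion.mpr ⟨(x, y), mem_offDiag.mpr ⟨hx, hy, hxy⟩, mem_inter.mpr ⟨hjx, hjy⟩⟩
  calc ({j | ∃ x y, x ≠ y ∧ x ∈ S ∧ y ∈ S ∧ j ∈ A x ∧ j ∈ A y}.ncard : ℝ)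
      ≤ #(S.offDiag.biUnion fun p => A p.1 ∩ A p.2) := by
        rw [← Set.ncard_coe_finset]; exact_mod_cast Set.ncard_le_ncard hsub
    _ ≤ ∑ p ∈ S.offDiag, (#(A p.1 ∩ A p.2) : ℝ) := by exact_mod_cast card_biUnion_le
    _ ≤ #S ^ 2 * m := sum_offDiag_card_inter_le hm hinter
    _ ≤ (k * Fintype.card ι / (k ^ 2 - m * Fintype.card ι)) ^ 2 * m := by gcongr

theorem ncard_setOf_exists_ne_mem_le_of_density {S : Set α} [Nonempty ι] {μ τ : ℝ}
    (hμ : 0 ≤ μ) (hτ : √μ < τ) (hcard : ∀ x ∈ S, τ * Fintype.card ι ≤ #(A x))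
    (hinter : S.Pairwise fun x y => (#(A x ∩ A y) : ℝ) ≤ μ * Fintype.card ι) :
    ({j | ∃ x y, x ≠ y ∧ x ∈ S ∧ y ∈ S ∧ j ∈ A x ∧ j ∈ A y}.ncard : ℝ) ≤
      (τ / (τ ^ 2 - μ)) ^ 2 * μ * Fintype.card ι := by
  have hτ0 : 0 ≤ τ := (Real.sqrt_nonneg μ).trans hτ.le
  have hN : (0 : ℝ) < Fintype.card ι := Nat.cast_pos.mpr Fintype.card_pos
  set N : ℝ := (Fintype.card ι : ℝ)
  have hlt : μ * N * N < (τ * N) ^ 2 := by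
    calc μ * N * N = μ * N ^ 2 := by ring
      _ < τ ^ 2 * N ^ 2 := by gcongr; exact Real.lt_sq_of_sqrt_lt hτ
      _ = (τ * N) ^ 2 := by ring
  have hratio : τ * N * N / ((τ * N) ^ 2 - μ * N * N) = τ / (τ ^ 2 - μ) := by
    rw [← mul_div_mul_right τ (τ ^ 2 - μ) (pow_pos hN 2).ne']
    congr 1 <;> ring
  calc ({j | ∃ x y, x ≠ y ∧ x ∈ S ∧ y ∈ S ∧ j ∈ A x ∧ j ∈ A y}.ncard : ℝ)
      ≤ (τ * N * N / ((τ * N) ^ 2 - μ * N * N)) ^ 2 * (μ * N) :=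
        ncard_setOf_exists_ne_mem_le (by positivity) (by positivity) hlt hcard hinter
    _ = (τ / (τ ^ 2 - μ)) ^ 2 * μ * N := by rw [hratio, mul_assoc]

end SetFamily

theorem stmt2_general {M ι F : Type*} [Fintype ι] (E : M → ι → F) (w : ι → F) (S : Set M)
    {μ τ : ℝ} (hμ : 0 ≤ μ) (hτ : √μ < τ)
    (hdist : ∀ x y, x ≠ y → ({j | E x j = E y j}.ncard : ℝ) ≤ μ * Fintype.card ι)
    (hS : ∀ x ∈ S, τ * Fintype.card ι ≤ ({j | E x j = w j}.ncard : ℝ)) :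
    ({j | ∃ x y, x ≠ y ∧ x ∈ S ∧ y ∈ S ∧ E x j = w j ∧ E y j = w j}.ncard : ℝ) ≤
      (τ / (τ ^ 2 - μ)) ^ 2 * μ * Fintype.card ι := by
  classical
  rcases isEmpty_or_nonempty ι with _ | _
  · simp [Set.eq_empty_of_isEmpty]
  let A (x : M) : Finset ι := {j | E x j = w j}
  have hcard : ∀ x ∈ S, τ * Fintype.card ι ≤ (A x).card := fun x hx => by
    simpa [A, Set.ncard_eq_toFinset_card'] using hS x hx
  have hinter : S.Pairwise fun x y => ((A x ∩ A y).card : ℝ) ≤ μ * Fintype.card ι := by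
    refine fun x _ y _ hxy => le_trans ?_ (hdist x y hxy)
    rw [← Set.ncard_coe_finset]
    refine Nat.cast_le.mpr (Set.ncard_le_ncard fun j hj => ?_)
    simp_all [A]
  simpa [A] using ncard_setOf_exists_ne_mem_le_of_density hμ hτ hcard hinter

theorem sq_div_sq_sub_mul_le_four_mul_div_sq {μ τ : ℝ} (hμ : 0 ≤ μ) (hτpos : 0 < τ)
    (hτ : 2 * √μ ≤ τ) :
    (τ / (τ ^ 2 - μ)) ^ 2 * μ ≤ 4 * μ / τ ^ 2 := by
  have hμτ : 4 * μ ≤ τ ^ 2 := by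
    calc 4 * μ = (2 * √μ) ^ 2 := by rw [mul_pow, Real.sq_sqrt hμ]; norm_num
      _ ≤ τ ^ 2 := by gcongr
  have hτ2 : 0 < τ ^ 2 := by positivity
  have hpos : 0 < τ ^ 2 - μ := by linarith
  have hlist : τ / (τ ^ 2 - μ) ≤ 2 / τ := by
    rw [div_le_div_iff₀ hpos hτpos]
    linarith
  calc (τ / (τ ^ 2 - μ)) ^ 2 * μ ≤ (2 / τ) ^ 2 * μ := by gcongr
    _ = 4 * μ / τ ^ 2 := by ring

/-- If `E : Fⁿ → F^N` has relative distance `1 − μ` and `τ ≥ 2√μ`, `τ > 0`,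
then for any word `w`, the number of indices `j` that are ambiguous for `w`,
i.e. such that two distinct `τ`-admissible messages both agree with `w` at `j`,
is at most `(4μ/τ²)·N`. -/
theorem stmt2 (F : Type*) [Fintype F] (n N : ℕ) (hn : 1 ≤ n) (hN : 1 ≤ N)
    (E : (Fin n → F) → (Fin N → F)) (μ τ : ℝ) (hμ : 0 ≤ μ)
    (hdist : ∀ x x' : Fin n → F, x ≠ x' →
      (({j : Fin N | E x j = E x' j} : Set (Fin N)).ncard : ℝ) ≤ μ * N)
    (hτpos : 0 < τ) (hτ : 2 * Real.sqrt μ ≤ τ)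
    (w : Fin N → F) :
    (({j : Fin N | ∃ x x' : Fin n → F, x ≠ x' ∧
        x ∈ agrSet E τ w ∧ x' ∈ agrSet E τ w ∧
        E x j = w j ∧ E x' j = w j} : Set (Fin N)).ncard : ℝ)
      ≤ (4 * μ / τ ^ 2) * N := by
  have hsqrt : √μ < τ := by linarith [Real.sqrt_nonneg μ]
  refine (stmt2_general E w (agrSet E τ w) hμ hsqrt (by simpa using hdist)
    (by simp [agrSet])).trans ?_
  rw [Fintype.card_fin]
  gcongr
  exact sq_div_sq_sub_mul_le_four_mul_div_sq hμ hτpos hτ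
end

section
/- (Claim 2.3 with the agreement parameter of Remark 2.4) Let F be a finite alphabet and E : Fⁿ → F^N (n, N ≥ 1) an error correcting code with relative distance 1 − μ, i.e., for all x ≠ x' in Fⁿ, |{j ∈ [N] : E(x)_j = E(x')_j}| ≤ μN. Set τ = (4μ)^{1/3} and assume τ > 0. Let w : [N] → F, let W : [N] → Fⁿ ∪ {⊥} be the τ-local decoding function of w with respect to E, and suppose v = E(y) for some y ∈ Fⁿ. Then |{j ∈ [N] : v_j = w_j and W(j) ≠ y}| ≤ 2(4μ)^{1/3}·N. -/
/-!
For every `τ > 0` the fraction of coordinates to be bounded is at most `max τ (2 * μ / τ ^ 2)`, and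
`τ = (4 * μ) ^ (1 / 3)` makes the second term equal to `τ / 2`. If `τ ^ 2 < 2 * μ`, that term
exceeds `1`, so let `2 * μ ≤ τ ^ 2`. If `y` is not `τ`-admissible, its codeword agrees with `w` on
less than a `τ` fraction of the coordinates. Otherwise, decoding misses `y` at a coordinate of
agreement only if another admissible word agrees with `w` there. By Cauchy–Schwarz, sets of density
at least `τ` whose pairwise intersections have density at most `τ ^ 2 / 2` have total density at
most `2`, so there are at most `2 / τ` admissible words, and each of them accounts for at most a
`τ ^ 2 / 2` fraction of the coordinates.
-/

open Finset

section SetFamily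

variable {X ι : Type*} [DecidableEq ι]

theorem sum_sum_card_inter_le {S : Finset X} {A : X → Finset ι} {c : ℝ} (hc : 0 ≤ c)
    (hA : (S : Set X).Pairwise fun x x' ↦ (#(A x ∩ A x') : ℝ) ≤ c) :
    ∑ x ∈ S, ∑ x' ∈ S, (#(A x ∩ A x') : ℝ) ≤ ∑ x ∈ S, (#(A x) : ℝ) + #S ^ 2 * c := by
  classical
  have row (x : X) (hx : x ∈ S) : ∑ x' ∈ S, (#(A x ∩ A x') : ℝ) ≤ #(A x) + #S * c := by
    have offDiag : ∑ x' ∈ S.erase x, (#(A x ∩ A x') : ℝ) ≤ #(S.erase x) • c :=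
      sum_le_card_nsmul _ _ _ fun x' hx' ↦
        hA hx (mem_of_mem_erase hx') (ne_of_mem_erase hx').symm
    rw [← add_sum_erase S _ hx, inter_self]
    grw [offDiag, nsmul_eq_mul, erase_subset]
  calc ∑ x ∈ S, ∑ x' ∈ S, (#(A x ∩ A x') : ℝ) ≤ ∑ x ∈ S, ((#(A x) : ℝ) + #S * c) := sum_le_sum row
    _ = ∑ x ∈ S, (#(A x) : ℝ) + #S ^ 2 * c := by
      rw [sum_add_distrib, sum_const, nsmul_eq_mul]; ring

variable [Fintype ι]

theorem sum_card_eq_sum_card_filter_mem (S : Finset X) (A : X → Finset ι) :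
    ∑ x ∈ S, #(A x) = ∑ j, #{x ∈ S | j ∈ A x} := by
  simpa [bipartiteAbove, bipartiteBelow] using
    sum_card_bipartiteAbove_eq_sum_card_bipartiteBelow (s := S) (t := univ) fun x j ↦ j ∈ A x

theorem sum_sq_card_filter_mem_s4 (S : Finset X) (A : X → Finset ι) :
    ∑ j, #{x ∈ S | j ∈ A x} ^ 2 = ∑ x ∈ S, ∑ x' ∈ S, #(A x ∩ A x') := by
  rw [← sum_product', sum_card_eq_sum_card_filter_mem (S ×ˢ S) fun p ↦ A p.1 ∩ A p.2]
  refine sum_congr rfl fun j _ ↦ ?_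
  simp only [mem_inter]
  rw [filter_product (j ∈ A ·) (j ∈ A ·), card_product, sq]

theorem sq_sum_card_le_card_mul_sum_card_inter_s4 (S : Finset X) (A : X → Finset ι) :
    (∑ x ∈ S, #(A x)) ^ 2 ≤ Fintype.card ι * ∑ x ∈ S, ∑ x' ∈ S, #(A x ∩ A x') := by
  rw [sum_card_eq_sum_card_filter_mem, ← sum_sq_card_filter_mem_s4]
  exact sq_sum_le_card_mul_sum_sq

theorem sum_card_le_two_mul_card {S : Finset X} {A : X → Finset ι} {τ : ℝ} (hτ : 0 ≤ τ)
    (hcard : ∀ x ∈ S, τ * Fintype.card ι ≤ #(A x))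
    (hinter : (S : Set X).Pairwise fun x x' ↦ (#(A x ∩ A x') : ℝ) ≤ τ ^ 2 / 2 * Fintype.card ι) :
    ∑ x ∈ S, (#(A x) : ℝ) ≤ 2 * Fintype.card ι := by
  set M := (Fintype.card ι : ℝ)
  set D : ℝ := ∑ x ∈ S, (#(A x) : ℝ)
  have lower : #S * (τ * M) ≤ D := by
    simpa only [nsmul_eq_mul] using card_nsmul_le_sum S _ _ hcard
  have upper : D ^ 2 ≤ M * (D + #S ^ 2 * (τ ^ 2 / 2 * M)) :=
    calc D ^ 2 ≤ M * ∑ x ∈ S, ∑ x' ∈ S, (#(A x ∩ A x') : ℝ) := by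
          simp only [D, M]; exact_mod_cast sq_sum_card_le_card_mul_sum_card_inter_s4 S A
      _ ≤ M * (D + #S ^ 2 * (τ ^ 2 / 2 * M)) := by
          gcongr; exact sum_sum_card_inter_le (by positivity) hinter
  have quadratic : D ^ 2 ≤ 2 * M * D := by
    have : (#S * (τ * M)) ^ 2 ≤ D ^ 2 := by gcongr
    linarith
  by_contra! hD
  have hD_pos : 0 < D := lt_of_le_of_lt (by positivity) hD
  exact hD.not_ge (le_of_mul_le_mul_right (sq D ▸ quadratic) hD_pos)

theorem card_inter_biUnion_le {S : Finset X} {A : X → Finset ι} {y : X} {τ : ℝ} (hτ : 0 ≤ τ)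
    (hy : y ∉ S) (hcard : ∀ x ∈ S, τ * Fintype.card ι ≤ #(A x))
    (hinter : Pairwise fun x x' ↦ (#(A x ∩ A x') : ℝ) ≤ τ ^ 2 / 2 * Fintype.card ι) :
    (#(A y ∩ S.biUnion A) : ℝ) ≤ τ * Fintype.card ι :=
  calc (#(A y ∩ S.biUnion A) : ℝ) ≤ ∑ x ∈ S, (#(A y ∩ A x) : ℝ) := by
        rw [inter_biUnion]; exact mod_cast card_biUnion_le
    _ ≤ #S • (τ ^ 2 / 2 * Fintype.card ι) :=
        sum_le_card_nsmul _ _ _ fun x hx ↦ hinter (ne_of_mem_of_not_mem hx hy).symm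
    _ = τ / 2 * #S • (τ * Fintype.card ι) := by simp only [nsmul_eq_mul]; ring
    _ ≤ τ / 2 * ∑ x ∈ S, (#(A x) : ℝ) := by gcongr; exact card_nsmul_le_sum S _ _ hcard
    _ ≤ τ / 2 * (2 * Fintype.card ι) := by
        gcongr; exact sum_card_le_two_mul_card hτ hcard (hinter.set_pairwise S)
    _ = τ * Fintype.card ι := by ring

end SetFamily

theorem two_mul_div_rpow_one_third_sq_le {μ : ℝ} (hμ : 0 ≤ μ) :
    2 * μ / ((4 * μ) ^ ((1 : ℝ) / 3)) ^ 2 ≤ (4 * μ) ^ ((1 : ℝ) / 3) := by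
  have cube : ((4 * μ) ^ ((1 : ℝ) / 3)) ^ 3 = 4 * μ := by
    simpa using Real.rpow_inv_natCast_pow (by positivity : 0 ≤ 4 * μ) three_ne_zero
  have nonneg : 0 ≤ (4 * μ) ^ ((1 : ℝ) / 3) := by positivity
  exact div_le_of_le_mul₀ (by positivity) nonneg (by rw [← pow_succ', cube]; linarith)

section Decoding

variable {X ι F : Type*} [Fintype ι] {E : X → ι → F} {τ : ℝ} {w : ι → F} {W : ι → Option X}

/-- The `τ`-admissible words for `w`, as in `agrSet`, for a code with an arbitrary message type and
an arbitrary finite type of coordinates. -/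
def admissible (E : X → ι → F) (τ : ℝ) (w : ι → F) : Set X :=
  {x | τ * Fintype.card ι ≤ ({j | E x j = w j}.ncard : ℝ)}

theorem agrSet_eq_admissible {n N : ℕ} (E : (Fin n → F) → Fin N → F) (τ : ℝ) (w : Fin N → F) :
    agrSet E τ w = admissible E τ w := by
  simp only [agrSet, admissible, Fintype.card_fin]

/-- `W` is the `τ`-local decoding function of `w`: it sends a coordinate `j` to the only
`τ`-admissible word whose encoding agrees with `w` at `j`. The value `⊥` (no such word, or several)
is encoded as `none`. -/
def IsLocalDecoding (E : X → ι → F) (τ : ℝ) (w : ι → F) (W : ι → Option X) : Prop :=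
  ∀ j x, W j = some x ↔
    x ∈ admissible E τ w ∧ E x j = w j ∧ ∀ x' ∈ admissible E τ w, E x' j = w j → x' = x

theorem IsLocalDecoding.exists_admissible_ne (hW : IsLocalDecoding E τ w W) {y : X}
    (hy : y ∈ admissible E τ w) {j : ι} (hj : E y j = w j) (hne : W j ≠ some y) :
    ∃ x ∈ admissible E τ w, x ≠ y ∧ E x j = w j := by
  by_contra! h
  exact hne ((hW j y).2 ⟨hy, hj, fun x hx hxj ↦ by_contra fun hxy ↦ h x hx hxy hxj⟩)

theorem IsLocalDecoding.exists_finset_cover (hW : IsLocalDecoding E τ w W) {y : X}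
    (hy : y ∈ admissible E τ w) :
    ∃ S : Finset X, y ∉ S ∧ (∀ x ∈ S, x ∈ admissible E τ w) ∧
      ∀ j, E y j = w j → W j ≠ some y → ∃ x ∈ S, E x j = w j := by
  classical
  have : Nonempty X := ⟨y⟩
  choose! f hf using fun j (h : E y j = w j ∧ W j ≠ some y) ↦
    hW.exists_admissible_ne hy h.1 h.2
  refine ⟨({j | E y j = w j ∧ W j ≠ some y} : Finset ι).image f, ?_, ?_, fun j hj hne ↦ ?_⟩
  · simpa using fun j hj hne ↦ (hf j ⟨hj, hne⟩).2.1
  · exact forall_mem_image.2 fun j hj ↦ (hf j (by simpa using hj)).1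
  · exact ⟨f j, mem_image_of_mem f (by simp [hj, hne]), (hf j ⟨hj, hne⟩).2.2⟩

theorem card_agree_inter_le_ncard [DecidableEq ι] [DecidableEq F] (u v w : ι → F) :
    #(({j | u j = w j} : Finset ι) ∩ ({j | v j = w j} : Finset ι)) ≤ {j | u j = v j}.ncard := by
  rw [Set.ncard_eq_toFinset_card', Set.toFinset_ofPred, ← filter_and]
  exact card_le_card (monotone_filter_right _ fun j _ h ↦ h.1.trans h.2.symm)

theorem IsLocalDecoding.ncard_le_of_mem_admissible (hW : IsLocalDecoding E τ w W) (hτ : 0 ≤ τ)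
    (hE : Pairwise fun x x' ↦ ({j | E x j = E x' j}.ncard : ℝ) ≤ τ ^ 2 / 2 * Fintype.card ι)
    {y : X} (hy : y ∈ admissible E τ w) :
    ({j | E y j = w j ∧ W j ≠ some y}.ncard : ℝ) ≤ τ * Fintype.card ι := by
  classical
  obtain ⟨S, hyS, hS, hcover⟩ := hW.exists_finset_cover hy
  let A (x : X) : Finset ι := {j | E x j = w j}
  have hcard (x : X) (hx : x ∈ S) : τ * Fintype.card ι ≤ #(A x) := by
    simpa [A, admissible, Set.ncard_eq_toFinset_card'] using hS x hx
  have hinter : Pairwise fun x x' ↦ (#(A x ∩ A x') : ℝ) ≤ τ ^ 2 / 2 * Fintype.card ι :=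
    hE.mono fun x x' h ↦ le_trans (mod_cast card_agree_inter_le_ncard (E x) (E x') w) h
  have hsub : {j | E y j = w j ∧ W j ≠ some y} ⊆ (A y ∩ S.biUnion A : Finset ι) :=
    fun j hj ↦ by simpa [A, hj.1] using hcover j hj.1 hj.2
  calc ({j | E y j = w j ∧ W j ≠ some y}.ncard : ℝ) ≤ #(A y ∩ S.biUnion A) := by
        rw [← Set.ncard_coe_finset]; exact mod_cast Set.ncard_le_ncard hsub
    _ ≤ τ * Fintype.card ι := card_inter_biUnion_le hτ hyS hcard hinter

theorem IsLocalDecoding.ncard_le (hW : IsLocalDecoding E τ w W) (hτ : 0 ≤ τ)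
    (hE : Pairwise fun x x' ↦ ({j | E x j = E x' j}.ncard : ℝ) ≤ τ ^ 2 / 2 * Fintype.card ι)
    (y : X) :
    ({j | E y j = w j ∧ W j ≠ some y}.ncard : ℝ) ≤ τ * Fintype.card ι := by
  by_cases hy : y ∈ admissible E τ w
  · exact hW.ncard_le_of_mem_admissible hτ hE hy
  · calc ({j | E y j = w j ∧ W j ≠ some y}.ncard : ℝ) ≤ {j | E y j = w j}.ncard :=
          mod_cast Set.ncard_le_ncard fun j hj ↦ hj.1
      _ ≤ τ * Fintype.card ι := (not_le.1 hy).le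

end Decoding

theorem stmt4_general {X ι F : Type*} [Fintype ι] {E : X → ι → F} {τ μ : ℝ} {w : ι → F}
    {W : ι → Option X} (hτ : 0 < τ)
    (hE : Pairwise fun x x' ↦ ({j | E x j = E x' j}.ncard : ℝ) ≤ μ * Fintype.card ι)
    (hW : IsLocalDecoding E τ w W) (y : X) :
    ({j | E y j = w j ∧ W j ≠ some y}.ncard : ℝ) ≤ max τ (2 * μ / τ ^ 2) * Fintype.card ι := by
  rcases le_or_gt (2 * μ) (τ ^ 2) with hμ | hμ
  · have hE' := hE.mono fun x x' h ↦ h.trans (by gcongr; linarith :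
      μ * Fintype.card ι ≤ τ ^ 2 / 2 * Fintype.card ι)
    grw [hW.ncard_le hτ.le hE' y, ← le_max_left]
  · have hone : 1 ≤ 2 * μ / τ ^ 2 := (one_le_div (by positivity)).2 hμ.le
    grw [← le_max_right, ← hone, one_mul, Set.ncard_le_card, Nat.card_eq_fintype_card]

/-- Claim 2.3 with the agreement parameter of Remark 2.4: with `τ = (4μ)^{1/3} > 0`
and `W` the `τ`-local decoding function of `w` with respect to a code `E` of
relative distance `1 − μ`, for every codeword `v = E y` the number of indices `j`
with `v_j = w_j` and `W(j) ≠ y` is at most `2(4μ)^{1/3}·N`. -/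
theorem stmt4 (F : Type*) [Fintype F] (n N : ℕ) (hn : 1 ≤ n) (hN : 1 ≤ N)
    (E : (Fin n → F) → (Fin N → F)) (μ : ℝ) (hμ : 0 ≤ μ)
    (hdist : ∀ x x' : Fin n → F, x ≠ x' →
      (({j : Fin N | E x j = E x' j} : Set (Fin N)).ncard : ℝ) ≤ μ * N)
    (hτpos : 0 < (4 * μ) ^ ((1 : ℝ) / 3))
    (w : Fin N → F) (W : Fin N → Option (Fin n → F))
    (hW : ∀ (j : Fin N) (x : Fin n → F), W j = some x ↔
      (x ∈ agrSet E ((4 * μ) ^ ((1 : ℝ) / 3)) w ∧ E x j = w j ∧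
        ∀ x' ∈ agrSet E ((4 * μ) ^ ((1 : ℝ) / 3)) w, E x' j = w j → x' = x))
    (y : Fin n → F) :
    (({j : Fin N | E y j = w j ∧ W j ≠ some y} : Set (Fin N)).ncard : ℝ)
      ≤ 2 * (4 * μ) ^ ((1 : ℝ) / 3) * N := by
  grw [stmt4_general hτpos (fun x x' hne ↦ by simpa using hdist x x' hne)
    (by simpa only [IsLocalDecoding, agrSet_eq_admissible] using hW) y,
    max_eq_left (two_mul_div_rpow_one_third_sq_le hμ), Fintype.card_fin]
  gcongr
  linarith
end

section
/- Let F be a field, let H ⊆ F be a finite nonempty subset, and let m be a natural number. For every function f : H^m → F there exists a unique polynomial g in m variables over F whose degree in each variable is strictly less than |H| and whose evaluation agrees with f at every point of H^m. -/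
/-!
Uniqueness is the combinatorial Nullstellensatz: a polynomial of degree `< #(S i)` in each variable
that vanishes on the grid `∏ i, S i` is zero. For existence, the product over `i` of the univariate
Lagrange basis polynomials of `S i` at `a i` is the indicator of `a` on the grid and has degree at
most `#(S i) - 1` in the `i`-th variable, so a linear combination of these products interpolates.
-/

open Finset MvPolynomial

section Uniqueness

variable {σ R : Type*} [Finite σ] [CommRing R] [IsDomain R]

theorem eq_of_degreeOf_lt_of_eval_grid_eq {S : σ → Finset R} {p q : MvPolynomial σ R}
    (hp : ∀ i, p.degreeOf i < #(S i)) (hq : ∀ i, q.degreeOf i < #(S i))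
    (heval : ∀ x : ∀ i, S i, eval (fun i => (x i : R)) p = eval (fun i => (x i : R)) q) :
    p = q := by
  refine sub_eq_zero.mp (eq_zero_of_eval_zero_at_prod_finset (p - q) S (fun i => ?_) fun x hx => ?_)
  · exact (degreeOf_sub_le i p q).trans_lt (max_lt (hp i) (hq i))
  · rw [map_sub, sub_eq_zero]
    exact heval fun i => ⟨x i, hx i⟩

end Uniqueness

section UnivariateDegree

variable {σ R : Type*} [CommSemiring R]

theorem degreeOf_toMvPolynomial_le_of_forall_pow {i j : σ} {p : Polynomial R} {d : ℕ}
    (h : ∀ k ≤ p.natDegree, degreeOf j (X i ^ k : MvPolynomial σ R) ≤ d) :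
    degreeOf j (p.toMvPolynomial i) ≤ d := by
  rw [Polynomial.toMvPolynomial, Polynomial.aeval_eq_sum_range]
  refine (degreeOf_sum_le j _ _).trans (Finset.sup_le fun k hk => ?_)
  rw [smul_eq_C_mul]
  exact (degreeOf_C_mul_le _ j _).trans (h k (Finset.mem_range_succ_iff.mp hk))

theorem degreeOf_toMvPolynomial_self_le (i : σ) (p : Polynomial R) :
    degreeOf i (p.toMvPolynomial i) ≤ p.natDegree := by
  obtain _ | _ := subsingleton_or_nontrivial R
  · rw [Subsingleton.elim (p.toMvPolynomial i) 0, degreeOf_zero]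
    exact Nat.zero_le _
  · exact degreeOf_toMvPolynomial_le_of_forall_pow fun k hk =>
      (degreeOf_X_self_pow i k).trans_le hk

theorem degreeOf_toMvPolynomial_of_ne {i j : σ} (hji : j ≠ i) (p : Polynomial R) :
    degreeOf j (p.toMvPolynomial i) = 0 :=
  Nat.le_zero.mp <|
    degreeOf_toMvPolynomial_le_of_forall_pow fun k _ => (degreeOf_X_pow_of_ne k hji).le

theorem degreeOf_prod_toMvPolynomial_le [Fintype σ] (p : σ → Polynomial R) (j : σ) :
    degreeOf j (∏ i, (p i).toMvPolynomial i) ≤ (p j).natDegree :=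
  calc degreeOf j (∏ i, (p i).toMvPolynomial i)
    _ ≤ ∑ i, degreeOf j ((p i).toMvPolynomial i) := degreeOf_prod_le j _ _
    _ = degreeOf j ((p j).toMvPolynomial j) :=
        Fintype.sum_eq_single j fun i hij => degreeOf_toMvPolynomial_of_ne hij.symm (p i)
    _ ≤ (p j).natDegree := degreeOf_toMvPolynomial_self_le j (p j)

end UnivariateDegree

section Existence

variable {σ F : Type*} [Fintype σ] [Field F] [DecidableEq F] {S : σ → Finset F}

/-- The Lagrange basis polynomial of the grid `∏ i, S i` at the node `a`: the product over the
variables of the univariate Lagrange basis polynomials, the nodes in direction `i` being the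
elements of `S i`. -/
noncomputable def gridLagrangeBasis (a : ∀ i, S i) : MvPolynomial σ F :=
  ∏ i, (Lagrange.basis univ ((↑) : S i → F) (a i)).toMvPolynomial i

theorem degreeOf_gridLagrangeBasis_le (a : ∀ i, S i) (j : σ) :
    (gridLagrangeBasis a).degreeOf j ≤ #(S j) - 1 := by
  refine (degreeOf_prod_toMvPolynomial_le _ j).trans_eq ?_
  rw [Lagrange.natDegree_basis Subtype.val_injective.injOn (mem_univ _), card_univ,
    Fintype.card_coe]

theorem eval_gridLagrangeBasis_self (a : ∀ i, S i) :
    eval (fun i => (a i : F)) (gridLagrangeBasis a) = 1 := by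
  rw [gridLagrangeBasis, map_prod]
  refine prod_eq_one fun i _ => ?_
  rw [eval_toMvPolynomial, Lagrange.eval_basis_self Subtype.val_injective.injOn (mem_univ _)]

theorem eval_gridLagrangeBasis_of_ne {a x : ∀ i, S i} (hax : a ≠ x) :
    eval (fun i => (x i : F)) (gridLagrangeBasis a) = 0 := by
  obtain ⟨i, hi⟩ := Function.ne_iff.mp hax
  rw [gridLagrangeBasis, map_prod]
  refine prod_eq_zero (mem_univ i) ?_
  rw [eval_toMvPolynomial, Lagrange.eval_basis_of_ne hi (mem_univ _)]

variable [DecidableEq σ]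

/-- The Lagrange interpolant of `f` on the grid `∏ i, S i`, i.e. the low degree extension of `f`. -/
noncomputable def gridInterpolate (f : (∀ i, S i) → F) : MvPolynomial σ F :=
  ∑ a, C (f a) * gridLagrangeBasis a

theorem degreeOf_gridInterpolate_lt (hS : ∀ i, (S i).Nonempty) (f : (∀ i, S i) → F) (j : σ) :
    (gridInterpolate f).degreeOf j < #(S j) := by
  have hterm (a : ∀ i, S i) : (C (f a) * gridLagrangeBasis a).degreeOf j ≤ #(S j) - 1 :=
    (degreeOf_C_mul_le _ j _).trans (degreeOf_gridLagrangeBasis_le a j)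
  have hsum : (gridInterpolate f).degreeOf j ≤ #(S j) - 1 :=
    (degreeOf_sum_le j _ _).trans (Finset.sup_le fun a _ => hterm a)
  exact hsum.trans_lt (Nat.sub_one_lt (hS j).card_ne_zero)

theorem eval_gridInterpolate (f : (∀ i, S i) → F) (x : ∀ i, S i) :
    eval (fun i => (x i : F)) (gridInterpolate f) = f x := by
  rw [gridInterpolate, map_sum, Fintype.sum_eq_single x]
  · rw [map_mul, eval_C, eval_gridLagrangeBasis_self, mul_one]
  · intro a hax
    rw [map_mul, eval_gridLagrangeBasis_of_ne hax, mul_zero]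

end Existence

theorem stmt5_general {σ F : Type*} [Finite σ] [Field F] (S : σ → Finset F)
    (hS : ∀ i, (S i).Nonempty) (f : (∀ i, S i) → F) :
    ∃! g : MvPolynomial σ F,
      (∀ i, g.degreeOf i < #(S i)) ∧ ∀ x : ∀ i, S i, eval (fun i => (x i : F)) g = f x := by
  classical
  have := Fintype.ofFinite σ
  refine ⟨gridInterpolate f, ⟨degreeOf_gridInterpolate_lt hS f, eval_gridInterpolate f⟩, ?_⟩
  rintro g ⟨hdeg, heval⟩
  exact eq_of_degreeOf_lt_of_eval_grid_eq hdeg (degreeOf_gridInterpolate_lt hS f) fun x =>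
    (heval x).trans (eval_gridInterpolate f x).symm

/-- Existence and uniqueness of multivariate interpolation over the grid `H^m`:
for every `f : H^m → F` there is a unique polynomial `g` in `m` variables over `F`
of degree `< |H|` in each variable whose evaluation agrees with `f` on `H^m`. -/
theorem stmt5 (F : Type*) [Field F] (H : Finset F) (hH : H.Nonempty) (m : ℕ)
    (f : (Fin m → H) → F) :
    ∃! g : MvPolynomial (Fin m) F,
      (∀ i : Fin m, g.degreeOf i < H.card) ∧
      ∀ x : Fin m → H, MvPolynomial.eval (fun i => (x i : F)) g = f x :=
  stmt5_general (fun _ => H) (fun _ => hH) f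
end

section
/- (Core of Lemma 5.12, sumcheck soundness) Let F be a finite field, H ⊆ F a finite subset, m ≥ 1 and d ≥ 0. Let f : F^m → F and s₁, …, s_m : F^m → F be evaluations of m-variate polynomials over F, each of total degree at most d. Suppose Σ_{x∈H^m} f(x) ≠ 0 and Σ_{h∈H} s₁(h,0,…,0) = 0. Then the number of points x = (x₁,…,x_m) ∈ F^m satisfying simultaneously (a) s_m(x) = f(x), and (b) for every i with 2 ≤ i ≤ m, s_{i−1}(x₁,…,x_{i−1},0,…,0) = Σ_{h∈H} s_i(x₁,…,x_{i−1},h,0,…,0), is at most m·d·|F|^{m−1}. -/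
/-
If every sumcheck relation were a polynomial identity, summing the `i`-th one over
`H^(i-1) × {0}^(m-i+1)` would telescope to `∑_{x ∈ H^m} f(x) = ∑_{h ∈ H} s₁(h, 0, …, 0)`. So when
these two sums differ, the difference of the two sides of some relation is a nonzero polynomial.
Its degree is at most `d`, because only affine arguments are substituted into `f` and the `s_i`, and
it vanishes wherever the verifier accepts, so the Schwartz–Zippel lemma bounds the number of such
points.
-/

open Finset Fintype MvPolynomial

section Telescoping

theorem sum_piFinset_update {ι M : Type*} [Fintype ι] [DecidableEq ι] {α : ι → Type*}
    [AddCommMonoid M] {S : ∀ i, Finset (α i)} {i : ι} {a : α i} (hS : S i = {a})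
    (T : Finset (α i)) (g : (∀ i, α i) → M) :
    ∑ x ∈ piFinset (Function.update S i T), g x =
      ∑ x ∈ piFinset S, ∑ b ∈ T, g (Function.update x i b) := by
  rw [← sum_product']
  refine sum_bij' (fun x _ => (Function.update x i a, x i))
    (fun y _ => Function.update y.1 i y.2) ?_ ?_ ?_ ?_ ?_
  · intro x hx
    rw [mem_piFinset] at hx
    refine mem_product.2 ⟨mem_piFinset.2 fun t => ?_, by simpa using hx i⟩
    obtain rfl | ht := eq_or_ne t i
    · simp [hS]
    · simpa [ht] using hx t
  · rintro ⟨y, b⟩ hy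
    obtain ⟨hyS, hb⟩ := mem_product.1 hy
    refine mem_piFinset.2 fun t => ?_
    obtain rfl | ht := eq_or_ne t i
    · simpa using hb
    · simpa [ht] using mem_piFinset.1 hyS t
  · simp
  · rintro ⟨y, b⟩ hy
    have hyi : y i = a := by simpa [hS] using mem_piFinset.1 (mem_product.1 hy).1 i
    simp [← hyi]
  · simp

variable {α M : Type*} [Zero α] [AddCommMonoid M] {m : ℕ}

/-- The point `(x₁, …, x_{j+1}, 0, …, 0)`: coordinates are numbered from `0`, and those up to `j`
inclusive are kept. -/
def prefixPoint (x : Fin m → α) (j : ℕ) : Fin m → α :=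
  fun t => if (t : ℕ) ≤ j then x t else 0

/-- The point `(x₁, …, x_{j+1}, h, 0, …, 0)` at which a round of the sumcheck protocol sums over
`h`; the coordinate numbered `j + 1` from `0` holds `h`. -/
def prefixPointSnoc (x : Fin m → α) (j : ℕ) (h : α) : Fin m → α :=
  fun t => if (t : ℕ) ≤ j then x t else if (t : ℕ) = j + 1 then h else 0

/-- The factors of the grid `H^(j+1) × {0}^(m-j-1)` over which the relation of round `j` is
summed. -/
def prefixGrid (H : Finset α) (j : ℕ) : Fin m → Finset α :=
  fun t => if (t : ℕ) ≤ j then H else {0}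

theorem prefixPoint_eq_self {H : Finset α} {j : ℕ} {x : Fin m → α}
    (hx : x ∈ piFinset (prefixGrid H j)) : prefixPoint x j = x := by
  funext t
  have hxt := mem_piFinset.1 hx t
  by_cases ht : (t : ℕ) ≤ j <;> simp_all [prefixPoint, prefixGrid]

theorem prefixPointSnoc_eq_update {j : ℕ} (hj : j + 1 < m) (x : Fin m → α) (h : α) :
    prefixPointSnoc x j h = Function.update (prefixPoint x j) ⟨j + 1, hj⟩ h := by
  funext t
  simp only [prefixPointSnoc, prefixPoint, Function.update_apply, Fin.ext_iff]
  grind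

theorem prefixGrid_zero (hm : 0 < m) (H : Finset α) :
    prefixGrid H 0 = Function.update (fun _ : Fin m => {0}) ⟨0, hm⟩ H := by
  funext t
  simp [prefixGrid, Function.update_apply, Fin.ext_iff]

theorem prefixGrid_succ {j : ℕ} (hj : j + 1 < m) (H : Finset α) :
    prefixGrid H (j + 1) = Function.update (prefixGrid H j) ⟨j + 1, hj⟩ H := by
  funext t
  simp only [prefixGrid, Function.update_apply, Fin.ext_iff]
  grind

theorem prefixGrid_pred_card (H : Finset α) :
    prefixGrid H (m - 1) = fun _ : Fin m => H := by
  funext t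
  exact if_pos (by omega)

theorem sum_prefixGrid_zero (hm : 0 < m) (H : Finset α) (g : (Fin m → α) → M) :
    ∑ x ∈ piFinset (prefixGrid H 0), g x =
      ∑ h ∈ H, g (fun t => if (t : ℕ) = 0 then h else 0) := by
  rw [prefixGrid_zero hm, sum_piFinset_update rfl, piFinset_singleton, sum_singleton]
  refine sum_congr rfl fun h _ => congrArg g ?_
  funext t
  simp [Function.update_apply, Fin.ext_iff]

theorem sum_prefixGrid_succ {j : ℕ} (hj : j + 1 < m) (H : Finset α) (g : (Fin m → α) → M) :
    ∑ x ∈ piFinset (prefixGrid H (j + 1)), g x =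
      ∑ x ∈ piFinset (prefixGrid H j), ∑ h ∈ H, g (prefixPointSnoc x j h) := by
  rw [prefixGrid_succ hj, sum_piFinset_update (a := 0) (by simp [prefixGrid])]
  refine sum_congr rfl fun x hx => ?_
  simp only [prefixPointSnoc_eq_update hj, prefixPoint_eq_self hx]

theorem sum_piFinset_eq_of_forall_prefixPoint_eq (hm : 1 ≤ m) (H : Finset α)
    (φ : Fin m → (Fin m → α) → M)
    (hφ : ∀ (j : ℕ) (hj : j + 1 < m) (x : Fin m → α),
      φ ⟨j, by omega⟩ (prefixPoint x j) = ∑ h ∈ H, φ ⟨j + 1, hj⟩ (prefixPointSnoc x j h)) :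
    ∑ x ∈ piFinset (fun _ => H), φ ⟨m - 1, by omega⟩ x =
      ∑ h ∈ H, φ ⟨0, hm⟩ (fun t => if (t : ℕ) = 0 then h else 0) := by
  have grid_sum (j : ℕ) (hj : j < m) :
      ∑ x ∈ piFinset (prefixGrid H j), φ ⟨j, hj⟩ x =
        ∑ h ∈ H, φ ⟨0, hm⟩ (fun t => if (t : ℕ) = 0 then h else 0) := by
    induction j with
    | zero => exact sum_prefixGrid_zero hm H _
    | succ j ih =>
      rw [sum_prefixGrid_succ hj, ← ih (by omega)]
      refine sum_congr rfl fun x hx => ?_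
      rw [← hφ j hj, prefixPoint_eq_self hx]
  simpa only [prefixGrid_pred_card] using grid_sum (m - 1) (by omega)

end Telescoping

section Polynomials

theorem totalDegree_bind₁_le {σ τ R : Type*} [CommSemiring R] {g : σ → MvPolynomial τ R} {k : ℕ}
    (hg : ∀ i, (g i).totalDegree ≤ k) (p : MvPolynomial σ R) :
    (bind₁ g p).totalDegree ≤ p.totalDegree * k := by
  rw [p.as_sum, map_sum, ← p.as_sum]
  refine totalDegree_finsetSum_le fun v hv => ?_
  rw [bind₁_monomial]
  calc (C (p.coeff v) * ∏ i ∈ v.support, g i ^ v i).totalDegree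
      ≤ (∏ i ∈ v.support, g i ^ v i).totalDegree := by
        simpa only [totalDegree_C, zero_add] using totalDegree_mul (C (p.coeff v)) _
    _ ≤ ∑ i ∈ v.support, (g i ^ v i).totalDegree := totalDegree_finsetProd _ _
    _ ≤ ∑ i ∈ v.support, v i * k :=
        sum_le_sum fun i _ => (totalDegree_pow _ _).trans (Nat.mul_le_mul_left _ (hg i))
    _ = (v.sum fun _ e => e) * k := (sum_mul _ _ _).symm
    _ ≤ p.totalDegree * k := Nat.mul_le_mul_right _ (le_totalDegree hv)

theorem eval_bind₁ {σ τ R : Type*} [CommSemiring R] (x : τ → R) (g : σ → MvPolynomial τ R)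
    (p : MvPolynomial σ R) : eval x (bind₁ g p) = eval (fun i => eval x (g i)) p :=
  eval₂Hom_bind₁ _ _ _ _

theorem card_zeros_piFinset_le {R : Type*} [CommRing R] [IsDomain R] [DecidableEq R] {m : ℕ}
    {p : MvPolynomial (Fin m) R} (hp : p ≠ 0) (S : Finset R) :
    #{x ∈ piFinset fun _ => S | eval x p = 0} ≤ p.totalDegree * #S ^ (m - 1) := by
  obtain _ | n := m
  · obtain ⟨c, rfl⟩ := C_surjective (Fin 0) p
    simp [show c ≠ 0 by simpa using hp]
  obtain rfl | hS := S.eq_empty_or_nonempty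
  · simp
  have hcard : (0 : ℚ≥0) < #S := by exact_mod_cast hS.card_pos
  have schwartz_zippel := schwartz_zippel_totalDegree hp S
  rw [div_le_div_iff₀ (by positivity) hcard, pow_succ, ← mul_assoc] at schwartz_zippel
  exact_mod_cast le_of_mul_le_mul_right schwartz_zippel hcard

end Polynomials

section Sumcheck

variable {R : Type*} [CommRing R] {m d : ℕ}

/-- The difference of the two sides of a sumcheck relation between consecutive partial sums `p` and
`q`, as a polynomial in the verifier's random point. -/
noncomputable def roundDefect (H : Finset R) (p q : MvPolynomial (Fin m) R) (j : ℕ) :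
    MvPolynomial (Fin m) R :=
  bind₁ (prefixPoint X j) p - ∑ h ∈ H, bind₁ (prefixPointSnoc X j (C h)) q

theorem eval_roundDefect (H : Finset R) (p q : MvPolynomial (Fin m) R) (j : ℕ) (x : Fin m → R) :
    eval x (roundDefect H p q j) =
      eval (prefixPoint x j) p - ∑ h ∈ H, eval (prefixPointSnoc x j h) q := by
  simp only [roundDefect, map_sub, map_sum, eval_bind₁, prefixPoint, prefixPointSnoc,
    apply_ite (eval x), eval_X, eval_C, map_zero]
  rfl

theorem totalDegree_roundDefect_le (H : Finset R) {p q : MvPolynomial (Fin m) R}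
    (hp : p.totalDegree ≤ d) (hq : q.totalDegree ≤ d) (j : ℕ) :
    (roundDefect H p q j).totalDegree ≤ d := by
  have hX (t : Fin m) : (X t : MvPolynomial (Fin m) R).totalDegree ≤ 1 :=
    (totalDegree_monomial_le _ _).trans (by simp)
  refine (totalDegree_sub _ _).trans (max_le ?_ (totalDegree_finsetSum_le fun h _ => ?_))
  · refine (totalDegree_bind₁_le (k := 1) (fun t => ?_) p).trans (by simpa using hp)
    unfold prefixPoint
    split_ifs <;> simp [hX]
  · refine (totalDegree_bind₁_le (k := 1) (fun t => ?_) q).trans (by simpa using hq)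
    unfold prefixPointSnoc
    split_ifs <;> simp [hX]

/-- All tests of the sumcheck verifier for `f` pass at the random point `x`. The partial sums are
numbered from `0`, so `s ⟨j, _⟩` is the paper's `s_{j+1}`. The claimed value of
`∑ h ∈ H, s₁(h, 0, …, 0)` does not involve `x` and is not among these tests. -/
def SumcheckAccepts (hm : 1 ≤ m) (H : Finset R) (f : MvPolynomial (Fin m) R)
    (s : Fin m → MvPolynomial (Fin m) R) (x : Fin m → R) : Prop :=
  eval x (s ⟨m - 1, by omega⟩) = eval x f ∧
    ∀ (j : ℕ) (hj : j + 1 < m),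
      eval (prefixPoint x j) (s ⟨j, by omega⟩) =
        ∑ h ∈ H, eval (prefixPointSnoc x j h) (s ⟨j + 1, hj⟩)

theorem exists_ne_zero_of_sumcheckAccepts (hm : 1 ≤ m) {H : Finset R}
    {f : MvPolynomial (Fin m) R} {s : Fin m → MvPolynomial (Fin m) R}
    (hf : f.totalDegree ≤ d) (hs : ∀ i, (s i).totalDegree ≤ d)
    (hsum : ∑ x ∈ piFinset (fun _ => H), eval x f ≠
      ∑ h ∈ H, eval (fun t : Fin m => if (t : ℕ) = 0 then h else 0) (s ⟨0, hm⟩)) :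
    ∃ q : MvPolynomial (Fin m) R, q ≠ 0 ∧ q.totalDegree ≤ d ∧
      ∀ x, SumcheckAccepts hm H f s x → eval x q = 0 := by
  by_contra! no_test
  have eq_zero (q : MvPolynomial (Fin m) R) (hq : q.totalDegree ≤ d)
      (hvanish : ∀ x, SumcheckAccepts hm H f s x → eval x q = 0) : q = 0 := by
    by_contra hq0
    obtain ⟨x, hx, hxq⟩ := no_test q hq0 hq
    exact hxq (hvanish x hx)
  have last_eq : s ⟨m - 1, by omega⟩ = f := by
    refine sub_eq_zero.1 (eq_zero _ ((totalDegree_sub _ _).trans (max_le (hs _) hf)) ?_)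
    intro x hx
    rw [map_sub, hx.1, sub_self]
  have defect_eq_zero (j : ℕ) (hj : j + 1 < m) :
      roundDefect H (s ⟨j, by omega⟩) (s ⟨j + 1, hj⟩) j = 0 := by
    refine eq_zero _ (totalDegree_roundDefect_le H (hs _) (hs _) j) fun x hx => ?_
    rw [eval_roundDefect, hx.2 j hj, sub_self]
  apply hsum
  rw [← last_eq]
  refine sum_piFinset_eq_of_forall_prefixPoint_eq hm H (fun i x => eval x (s i)) fun j hj x => ?_
  rw [← sub_eq_zero, ← eval_roundDefect, defect_eq_zero j hj, map_zero]

theorem stmt8_general [IsDomain R] (hm : 1 ≤ m) (S : Finset R) {H : Finset R}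
    {f : MvPolynomial (Fin m) R} {s : Fin m → MvPolynomial (Fin m) R}
    (hf : f.totalDegree ≤ d) (hs : ∀ i, (s i).totalDegree ≤ d)
    (hsum : ∑ x ∈ piFinset (fun _ => H), eval x f ≠
      ∑ h ∈ H, eval (fun t : Fin m => if (t : ℕ) = 0 then h else 0) (s ⟨0, hm⟩)) :
    {x : Fin m → R | (∀ t, x t ∈ S) ∧ SumcheckAccepts hm H f s x}.ncard ≤ d * #S ^ (m - 1) := by
  classical
  obtain ⟨q, hq0, hqd, hq⟩ := exists_ne_zero_of_sumcheckAccepts hm hf hs hsum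
  calc {x : Fin m → R | (∀ t, x t ∈ S) ∧ SumcheckAccepts hm H f s x}.ncard
      ≤ #{x ∈ piFinset fun _ => S | eval x q = 0} := by
        rw [← Set.ncard_coe_finset]
        refine Set.ncard_le_ncard (fun x hx => ?_) (finite_toSet _)
        simpa using ⟨hx.1, hq x hx.2⟩
    _ ≤ q.totalDegree * #S ^ (m - 1) := card_zeros_piFinset_le hq0 S
    _ ≤ d * #S ^ (m - 1) := Nat.mul_le_mul_right _ hqd

end Sumcheck

/-- Core of Lemma 5.12 (sumcheck soundness): let `f` and `s₁, …, s_m` (here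
`s ⟨k⟩` is `s_{k+1}`, 0-based) be `m`-variate polynomials over a finite field `F`
of total degree at most `d`. If `Σ_{x∈H^m} f(x) ≠ 0` while
`Σ_{h∈H} s₁(h,0,…,0) = 0`, then the number of points `x ∈ F^m` at which all the
sumcheck tests pass, namely `s_m(x) = f(x)` and
`s_{i−1}(x₁,…,x_{i−1},0,…,0) = Σ_{h∈H} s_i(x₁,…,x_{i−1},h,0,…,0)` for every
`2 ≤ i ≤ m`, is at most `m·d·|F|^{m−1}`. -/
theorem stmt8 (F : Type*) [Field F] [Fintype F] (H : Finset F) (m d : ℕ)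
    (hm : 1 ≤ m)
    (f : MvPolynomial (Fin m) F) (s : Fin m → MvPolynomial (Fin m) F)
    (hf : f.totalDegree ≤ d) (hs : ∀ i, (s i).totalDegree ≤ d)
    (hsum : ∑ x ∈ Fintype.piFinset (fun _ : Fin m => H),
      MvPolynomial.eval x f ≠ 0)
    (hzero : ∑ h ∈ H, MvPolynomial.eval
      (fun t : Fin m => if (t : ℕ) = 0 then h else 0) (s ⟨0, by omega⟩) = 0) :
    ({x : Fin m → F |
        MvPolynomial.eval x (s ⟨m - 1, by omega⟩) = MvPolynomial.eval x f ∧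
        ∀ (j : ℕ) (hj : j + 1 < m),
          MvPolynomial.eval (fun t : Fin m => if (t : ℕ) ≤ j then x t else 0)
              (s ⟨j, by omega⟩) =
            ∑ h ∈ H, MvPolynomial.eval
              (fun t : Fin m => if (t : ℕ) ≤ j then x t else if (t : ℕ) = j + 1 then h else 0)
              (s ⟨j + 1, hj⟩)} : Set (Fin m → F)).ncard
      ≤ m * d * Fintype.card F ^ (m - 1) := by
  have bound := stmt8_general hm Finset.univ hf hs (hzero ▸ hsum)
  simp only [Finset.mem_univ, implies_true, true_and] at bound
  exact bound.trans (Nat.mul_le_mul_right _ (Nat.le_mul_of_pos_left d hm))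
end
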